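/- arXiv:1607.08716 — 2 statements merged into one kernel-verified Lean document; each statement's English description precedes it below -/
import Mathlib

section
/- Let Λ₀ = Mℤ^d ⊂ ℝ^d be a lattice of determinant one (|det M| = 1) and let u : Λ₀ → ℝ^d be a bounded function (there is C > 0 with |u(p)| ≤ C for all p ∈ Λ₀). Let Λ_u = {p + u(p) : p ∈ Λ₀}. Then lim_{α→0⁺} θ_{Λ_u}(α)/θ_{Λ₀}(α) = 1, where θ_{Λ_u}(α) = Σ_{p∈Λ₀} exp(−πα|p+u(p)|²) and θ_{Λ₀}(α) = Σ_{p∈Λ₀} exp(−πα|p|²). -/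
open scoped BigOperators

/-!
Write `s = √α` and let `v k = Mk + u(Mk)` (or `v k = Mk`); in both cases each coordinate of `v k`
is within a fixed distance of that of `Mk`. The map `x ↦ ⌊x⌋` pushes Lebesgue measure on `ℝ^d` to
counting measure on `ℤ^d`, so after rescaling
`s^d ∑ₖ exp(-πα|v k|²) = ∫ exp(-π |s v(⌊x/s⌋)|²) dx`.
As `s → 0⁺` the point `s v(⌊x/s⌋)` converges to `Mx`, being within `O(s)` of it, and the integrand
is dominated by a multiple of the Gaussian `exp(-π|Mx|²/2)`. By dominated convergence both theta
functions, multiplied by `α^{d/2}`, tend to the same positive number `∫ exp(-π|Mx|²) dx`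
(`tendsto_scaled_theta`), hence their ratio tends to `1`.
-/

open MeasureTheory Filter Topology

/-- The coordinatewise floor `ℝ^d → ℤ^d`. -/
noncomputable def floorVec {d : ℕ} (x : Fin d → ℝ) : Fin d → ℤ := fun i => ⌊x i⌋

lemma measurable_floorVec {d : ℕ} : Measurable (floorVec (d := d)) :=
  measurable_pi_lambda _ fun i => Int.measurable_floor.comp (measurable_pi_apply i)

/-- The fibres of the floor map are unit cubes, so it pushes volume to counting measure. -/
lemma map_floorVec {d : ℕ} :
    (volume : Measure (Fin d → ℝ)).map floorVec = Measure.count := by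
  refine Measure.ext_iff_singleton.mpr fun k => ?_
  rw [Measure.map_apply measurable_floorVec (measurableSet_singleton k), Measure.count_singleton]
  have h : floorVec ⁻¹' {k} = Set.pi Set.univ fun i => Set.Ico (k i : ℝ) (k i + 1) := by
    ext x
    simp [floorVec, funext_iff, Int.floor_eq_iff]
  rw [h, volume_pi_pi]
  simp

/-- Summability is not needed: if it fails, both sides are zero. -/
lemma tsum_eq_integral_floorVec {d : ℕ} (g : (Fin d → ℤ) → ℝ) :
    ∑' k, g k = ∫ x, g (floorVec x) := by
  rw [← integral_map (φ := floorVec) measurable_floorVec.aemeasurable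
    (measurable_of_countable g).aestronglyMeasurable, map_floorVec]
  by_cases h : Integrable g Measure.count
  · rw [integral_countable h]
    simp [Measure.real]
  · rw [integral_undef h, tsum_eq_zero_of_not_summable]
    rwa [← summable_norm_iff, ← integrable_count_iff]

lemma scaled_tsum_eq_integral {d : ℕ} (g : (Fin d → ℤ) → ℝ) {s : ℝ} (hs : 0 < s) :
    s ^ d * ∑' k, g k = ∫ x, g (floorVec (s⁻¹ • x)) := by
  rw [Measure.integral_comp_smul volume (fun x => g (floorVec x)), tsum_eq_integral_floorVec]
  simp [abs_of_pos hs]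

lemma integrable_gaussian_matrix {d : ℕ} {M : Matrix (Fin d) (Fin d) ℝ} (hdet : |M.det| = 1)
    {c : ℝ} (hc : 0 < c) :
    Integrable fun x : Fin d → ℝ => Real.exp (-c * ∑ i, (M.mulVec x i) ^ 2) := by
  have h0 : M.det ≠ 0 := by
    intro h
    simp [h] at hdet
  have hmap := Real.map_matrix_volume_pi_eq_smul_volume_pi h0
  rw [abs_inv, hdet] at hmap
  simp only [inv_one, ENNReal.ofReal_one, one_smul] at hmap
  have hmp : MeasurePreserving (Matrix.toLin' M) volume volume :=
    ⟨(LinearMap.continuous_of_finiteDimensional _).measurable, hmap⟩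
  have hg : Integrable fun x : Fin d → ℝ => Real.exp (-c * ∑ i, (x i) ^ 2) := by
    have := Integrable.fintype_prod (μ := fun _ : Fin d => (volume : Measure ℝ))
      (f := fun _ x => Real.exp (-c * x ^ 2)) fun _ => integrable_exp_neg_mul_sq hc
    simpa [← Real.exp_sum, Finset.mul_sum, volume_pi] using this
  exact hmp.integrable_comp_of_integrable hg

/-- The rescaled configuration point attached to `x` lies within `O(s)` of `Mx`. -/
lemma abs_scaled_point_sub_le {d : ℕ} {M : Matrix (Fin d) (Fin d) ℝ}
    {v : (Fin d → ℤ) → (Fin d → ℝ)} {C : ℝ}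
    (hv : ∀ k i, |v k i - M.mulVec (fun j => (k j : ℝ)) i| ≤ C)
    {s : ℝ} (hs : 0 < s) (x : Fin d → ℝ) (i : Fin d) :
    |s * v (floorVec (s⁻¹ • x)) i - M.mulVec x i| ≤ s * (C + ∑ i, ∑ j, |M i j|) := by
  set y : Fin d → ℝ := s⁻¹ • x with hy
  have hx : x = s • y := by rw [hy, smul_inv_smul₀ hs.ne']
  have h1 : |M.mulVec (fun j => (floorVec y j : ℝ)) i - M.mulVec y i| ≤ ∑ i, ∑ j, |M i j| := by
    have h2 : M.mulVec (fun j => (floorVec y j : ℝ)) i - M.mulVec y i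
        = ∑ j, M i j * ((⌊y j⌋ : ℝ) - y j) := by
      simp [Matrix.mulVec, dotProduct, floorVec, mul_sub]
    rw [h2]
    calc _ ≤ ∑ j, |M i j * ((⌊y j⌋ : ℝ) - y j)| := Finset.abs_sum_le_sum_abs _ _
      _ ≤ ∑ j, |M i j| := by
        refine Finset.sum_le_sum fun j _ => ?_
        rw [abs_mul]
        refine mul_le_of_le_one_right (abs_nonneg _) (abs_le.mpr ⟨?_, ?_⟩)
        · linarith [Int.lt_floor_add_one (y j)]
        · linarith [Int.floor_le (y j)]
      _ ≤ _ := Finset.single_le_sum (f := fun i => ∑ j, |M i j|)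
        (fun i _ => Finset.sum_nonneg fun j _ => abs_nonneg _) (Finset.mem_univ i)
  have h3 : s * v (floorVec y) i - M.mulVec x i = s * (v (floorVec y) i - M.mulVec y i) := by
    rw [hx, Matrix.mulVec_smul, Pi.smul_apply, smul_eq_mul, mul_sub]
  rw [h3, abs_mul, abs_of_pos hs]
  refine mul_le_mul_of_nonneg_left ?_ hs.le
  exact (abs_sub_le _ (M.mulVec (fun j => (floorVec y j : ℝ)) i) _).trans
    (add_le_add (hv _ _) h1)

/-- Any configuration at bounded distance from the lattice `Mℤ^d` has the same leading theta
asymptotics as `α → 0⁺`. -/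
lemma tendsto_scaled_theta {d : ℕ} {M : Matrix (Fin d) (Fin d) ℝ} (hdet : |M.det| = 1)
    {v : (Fin d → ℤ) → (Fin d → ℝ)} {C : ℝ} (hC : 0 ≤ C)
    (hv : ∀ k i, |v k i - M.mulVec (fun j => (k j : ℝ)) i| ≤ C) :
    Tendsto (fun α : ℝ => √α ^ d * ∑' k, Real.exp (-Real.pi * α * ∑ i, (v k i) ^ 2))
      (𝓝[>] 0) (𝓝 (∫ x : Fin d → ℝ, Real.exp (-Real.pi * ∑ i, (M.mulVec x i) ^ 2))) := by
  set D : ℝ := C + ∑ i, ∑ j, |M i j| with hD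
  have hD0 : 0 ≤ D :=
    add_nonneg hC (Finset.sum_nonneg fun i _ => Finset.sum_nonneg fun j _ => abs_nonneg _)
  have hEq : (fun α : ℝ => ∫ x : Fin d → ℝ,
      Real.exp (-Real.pi * ∑ i, (√α * v (floorVec ((√α)⁻¹ • x)) i) ^ 2)) =ᶠ[𝓝[>] 0]
      fun α : ℝ => √α ^ d * ∑' k, Real.exp (-Real.pi * α * ∑ i, (v k i) ^ 2) := by
    filter_upwards [self_mem_nhdsWithin] with α hα
    rw [scaled_tsum_eq_integral _ (Real.sqrt_pos.mpr hα)]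
    simp only [mul_pow, Real.sq_sqrt (le_of_lt hα), ← Finset.mul_sum, mul_assoc]
  refine Tendsto.congr' hEq ?_
  refine tendsto_integral_filter_of_dominated_convergence
    (fun x => Real.exp (Real.pi * (d * D ^ 2)) *
      Real.exp (-(Real.pi / 2) * ∑ i, (M.mulVec x i) ^ 2)) ?_ ?_ ?_ ?_
  · refine Eventually.of_forall fun α => Measurable.aestronglyMeasurable ?_
    have hm : Measurable fun x : Fin d → ℝ => floorVec ((√α)⁻¹ • x) :=
      measurable_floorVec.comp (measurable_const_smul _)
    exact (measurable_of_countable fun k : Fin d → ℤ =>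
      Real.exp (-Real.pi * ∑ i, (√α * v k i) ^ 2)).comp hm
  · filter_upwards [Ioc_mem_nhdsGT (zero_lt_one' ℝ)] with α hα
    refine ae_of_all _ fun x => ?_
    have hs : 0 < √α := Real.sqrt_pos.mpr hα.1
    have hs1 : √α ≤ 1 := Real.sqrt_le_one.mpr hα.2
    rw [Real.norm_eq_abs, Real.abs_exp, ← Real.exp_add, Real.exp_le_exp]
    have key : ∑ i, ((M.mulVec x i) ^ 2 / 2 - D ^ 2)
        ≤ ∑ i, (√α * v (floorVec ((√α)⁻¹ • x)) i) ^ 2 := by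
      refine Finset.sum_le_sum fun i _ => ?_
      have h := (abs_scaled_point_sub_le hv hs x i).trans (mul_le_of_le_one_left hD0 hs1)
      have h2 := sq_le_sq' (abs_le.mp h).1 (abs_le.mp h).2
      -- `a²/2 ≤ w² + (w - a)²`, since the difference is `(2w - a)²/2`
      nlinarith [sq_nonneg (2 * (√α * v (floorVec ((√α)⁻¹ • x)) i) - M.mulVec x i)]
    rw [Finset.sum_sub_distrib, ← Finset.sum_div] at key
    simp only [Finset.sum_const, Finset.card_univ, Fintype.card_fin, nsmul_eq_mul] at key
    nlinarith [mul_le_mul_of_nonneg_left key Real.pi_pos.le]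
  · exact (integrable_gaussian_matrix hdet (by positivity)).const_mul _
  · refine ae_of_all _ fun x => ?_
    refine (Real.continuous_exp.tendsto _).comp (Tendsto.const_mul _ ?_)
    refine tendsto_finsetSum _ fun i _ => Tendsto.pow ?_ 2
    rw [tendsto_iff_dist_tendsto_zero]
    have hlim : Tendsto (fun α : ℝ => √α * D) (𝓝[>] 0) (𝓝 0) := by
      have : Tendsto (fun α : ℝ => √α * D) (𝓝 0) (𝓝 (√0 * D)) :=
        (Real.continuous_sqrt.mul continuous_const).tendsto 0
      simp only [Real.sqrt_zero, zero_mul] at this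
      exact this.mono_left nhdsWithin_le_nhds
    refine squeeze_zero' (Eventually.of_forall fun _ => dist_nonneg) ?_ hlim
    filter_upwards [self_mem_nhdsWithin] with α hα
    rw [Real.dist_eq]
    exact abs_scaled_point_sub_le hv (Real.sqrt_pos.mpr hα) x i

/-- for a unit-determinant lattice `Λ₀ = Mℤ^d` and a bounded perturbation
`u : Λ₀ → ℝ^d`, the ratio `θ_{Λ_u}(α)/θ_{Λ₀}(α)` tends to `1` as `α → 0⁺`, where
`θ_{Λ_u}(α) = Σ_{k∈ℤ^d} exp(−πα|Mk + u(Mk)|²)`. -/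
theorem perturbed_theta_ratio_tendsto_one
    (d : ℕ) (M : Matrix (Fin d) (Fin d) ℝ) (hdet : |M.det| = 1)
    (u : (Fin d → ℝ) → (Fin d → ℝ)) (C : ℝ) (hC : 0 < C)
    (hu : ∀ k : Fin d → ℤ,
      Real.sqrt (∑ i, (u (M.mulVec (fun j => (k j : ℝ))) i) ^ 2) ≤ C) :
    Filter.Tendsto (fun α : ℝ =>
        (∑' k : Fin d → ℤ,
            Real.exp (-Real.pi * α * ∑ i,
              (M.mulVec (fun j => (k j : ℝ)) i
                + u (M.mulVec (fun j => (k j : ℝ))) i) ^ 2))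
        / (∑' k : Fin d → ℤ,
            Real.exp (-Real.pi * α * ∑ i, (M.mulVec (fun j => (k j : ℝ)) i) ^ 2)))
      (nhdsWithin 0 (Set.Ioi 0)) (nhds 1) := by
  have h1 := tendsto_scaled_theta hdet (C := C)
    (v := fun k i => M.mulVec (fun j => (k j : ℝ)) i + u (M.mulVec (fun j => (k j : ℝ))) i)
    hC.le fun k i => by
      rw [add_sub_cancel_left, ← Real.sqrt_sq_eq_abs]
      refine (Real.sqrt_le_sqrt ?_).trans (hu k)
      exact Finset.single_le_sum (f := fun i => (u (M.mulVec (fun j => (k j : ℝ))) i) ^ 2)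
        (fun i _ => sq_nonneg _) (Finset.mem_univ i)
  have h0 := tendsto_scaled_theta hdet (C := 0)
    (v := fun k i => M.mulVec (fun j => (k j : ℝ)) i) le_rfl fun k i => by simp
  have hpos : 0 < ∫ x : Fin d → ℝ, Real.exp (-Real.pi * ∑ i, (M.mulVec x i) ^ 2) :=
    integral_exp_pos (integrable_gaussian_matrix hdet Real.pi_pos)
  have h := h1.div h0 hpos.ne'
  rw [div_self hpos.ne'] at h
  refine h.congr' ?_
  filter_upwards [self_mem_nhdsWithin] with α hα
  exact mul_div_mul_left _ _ (pow_pos (Real.sqrt_pos.mpr hα) d).ne'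
end

section
/- For t > 0, α > 0 and y > 0 define E_t(y;α) = θ₃(t²α)·θ₃(yα)·θ₃(α/y) + θ₂(t²α)·θ₂(yα)·θ₂(α/y), which equals the theta function θ_{L_{y,t}}(α) of the body-centred-orthorhombic lattice L_{y,t}. Then for every t > 0 and α > 0 the function y ↦ E_t(y;α) is strictly increasing on [√3, +∞). Consequently, any minimizer of y ↦ E_t(y;α) over [1,+∞) belongs to the interval [1, √3]. -/
/-!
With `a = θ₂(t²α)` and `b = θ₃(t²α)`, one has `0 < a ≤ b` and
`E_t = a · F + (b - a) · R`, where `R(y) = θ₃(yα)θ₃(α/y)` and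
`F(y) = θ₃(yα)θ₃(α/y) + θ₂(yα)θ₂(α/y)` are the theta functions of the rectangular and of the
rhombic lattice of aspect ratio `y`. Hence it suffices that `F` is strictly increasing and `R`
nondecreasing on `[√3, ∞)` (`rhombTheta_strictMono`, `rectTheta_mono`).

Both lattices are similar to their duals, so `F(·; 4/α) = (α/2) F(·; α)` and
`R(·; 1/α) = α R(·; α)`; thus only `α ≥ 2`, respectively `α ≥ 1`, matters, where the theta series
are governed by their leading terms.

* For `F`, the value `y = √3` is the hexagonal lattice, whose rotation of order three forces
  `F'(√3) = 0` (`hex_critical`). It remains to see that `y²F'(y)` is strictly increasing. In its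
  derivative, the second-order terms of each of the two products form a positive quadratic
  expression by Cauchy–Schwarz for the moments of the theta series
  (`second_variation_quadratic`). This stays true after the row of lattice points through the
  origin has been removed, and the contribution `(α/y)² θ₃''(α/y)` of that row outweighs the
  first-order terms, the only negative ones left (`second_variation_bound`).
* For `R`, estimating the leading terms shows directly that `R' ≥ 0` (`rect_variation_bound`).

A minimizer `y₀ > √3` would contradict `E_t(√3) < E_t(y₀)`.
-/

open scoped BigOperators

/-- The classical Jacobi theta function `θ₂(x) = Σ_{k∈ℤ} e^{−π(k+1/2)²x}`. -/
noncomputable def theta2 (x : ℝ) : ℝ :=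
  ∑' n : ℤ, Real.exp (-Real.pi * ((n : ℝ) + 1 / 2) ^ 2 * x)

/-- The classical Jacobi theta function `θ₃(x) = Σ_{k∈ℤ} e^{−πk²x}`. -/
noncomputable def theta3 (x : ℝ) : ℝ :=
  ∑' n : ℤ, Real.exp (-Real.pi * (n : ℝ) ^ 2 * x)

/-- The theta function `E_t(y;α) = θ_{L_{y,t}}(α)` of the body-centred-orthorhombic
lattice `L_{y,t}`. -/
noncomputable def Et (t α y : ℝ) : ℝ :=
  theta3 (t ^ 2 * α) * theta3 (y * α) * theta3 (α / y)
    + theta2 (t ^ 2 * α) * theta2 (y * α) * theta2 (α / y)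

open Real

/-- The moment sums `∑ₙ (π(n+s)²)ʲ e^{-π(n+s)²x}`. The shifts `s = 0` and `s = 1/2` with `j = 0`
give `θ₃` and `θ₂`; increasing `j` by one is differentiation in `x` up to sign. -/
noncomputable def thetaM (s : ℝ) (j : ℕ) (x : ℝ) : ℝ :=
  ∑' n : ℤ, (π * ((n : ℝ) + s) ^ 2) ^ j * exp (-π * ((n : ℝ) + s) ^ 2 * x)

lemma theta3_eq (x : ℝ) : theta3 x = thetaM 0 0 x := by simp [theta3, thetaM]

lemma theta2_eq (x : ℝ) : theta2 x = thetaM (1 / 2) 0 x := by simp [theta2, thetaM]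

/-! ### Summability and differentiation -/

lemma summable_thetaM (s : ℝ) (j : ℕ) {x : ℝ} (hx : 0 < x) :
    Summable fun n : ℤ => (π * ((n : ℝ) + s) ^ 2) ^ j * exp (-π * ((n : ℝ) + s) ^ 2 * x) := by
  have h := (HurwitzKernelBounds.summable_f_int (2 * j) s hx).mul_left (π ^ j)
  refine h.congr fun n => ?_
  rw [HurwitzKernelBounds.f_int, mul_pow, pow_mul |(n : ℝ) + s|, sq_abs]
  ring

lemma hasSum_thetaM (s : ℝ) (j : ℕ) {x : ℝ} (hx : 0 < x) :
    HasSum (fun n : ℤ => (π * ((n : ℝ) + s) ^ 2) ^ j * exp (-π * ((n : ℝ) + s) ^ 2 * x))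
      (thetaM s j x) :=
  (summable_thetaM s j hx).hasSum

lemma thetaM_nonneg (s : ℝ) (j : ℕ) (x : ℝ) : 0 ≤ thetaM s j x :=
  tsum_nonneg fun n => by positivity

lemma hasDerivAt_thetaM (s : ℝ) (j : ℕ) {x : ℝ} (hx : 0 < x) :
    HasDerivAt (thetaM s j) (-thetaM s (j + 1) x) x := by
  have hx2 : 0 < x / 2 := by linarith
  have key := hasDerivAt_tsum_of_isPreconnected
    (g := fun (n : ℤ) (z : ℝ) =>
      (π * ((n : ℝ) + s) ^ 2) ^ j * exp (-π * ((n : ℝ) + s) ^ 2 * z))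
    (g' := fun (n : ℤ) (z : ℝ) =>
      -((π * ((n : ℝ) + s) ^ 2) ^ (j + 1) * exp (-π * ((n : ℝ) + s) ^ 2 * z)))
    (t := Set.Ioi (x / 2)) (y₀ := x) (y := x)
    (summable_thetaM s (j + 1) hx2) isOpen_Ioi isPreconnected_Ioi ?_ ?_
    (by simp; linarith) (summable_thetaM s j hx) (by simp; linarith)
  · rw [tsum_neg] at key
    exact key
  · intro n y _
    have h := (((hasDerivAt_id y).const_mul (-π * ((n : ℝ) + s) ^ 2)).exp).const_mul
      ((π * ((n : ℝ) + s) ^ 2) ^ j)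
    refine h.congr_deriv ?_
    simp only [id]
    ring
  · intro n y hy
    have hy : x / 2 < y := hy
    rw [norm_neg, Real.norm_of_nonneg (by positivity)]
    refine mul_le_mul_of_nonneg_left (exp_le_exp.2 ?_) (by positivity)
    have : 0 ≤ π * ((n : ℝ) + s) ^ 2 := by positivity
    nlinarith

/-! ### Functional equations -/

/-- Splitting a sum over `ℤ` into even and odd indices. -/
lemma hasSum_int_even_odd {f : ℤ → ℝ} {a b : ℝ} (h0 : HasSum (fun n : ℤ => f (2 * n)) a)
    (h1 : HasSum (fun n : ℤ => f (2 * n + 1)) b) : HasSum f (a + b) := by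
  have i0 : Function.Injective fun n : ℤ => 2 * n := fun a b h => by simp at h; omega
  have i1 : Function.Injective fun n : ℤ => 2 * n + 1 := fun a b h => by simp at h; omega
  refine (i0.hasSum_range_iff.2 h0).add_isCompl ?_ (i1.hasSum_range_iff.2 h1)
  have e0 : Set.range (fun n : ℤ => 2 * n) = {n | Even n} := by
    ext n; simp only [Set.mem_range, Set.mem_ofPred_eq, even_iff_exists_two_mul, eq_comm]
  have e1 : Set.range (fun n : ℤ => 2 * n + 1) = {n | Odd n} := by
    ext n; simp only [Set.mem_range, Set.mem_ofPred_eq, Odd, eq_comm]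
  rw [e0, e1]
  exact Int.isCompl_even_odd

lemma theta3_split {x : ℝ} (hx : 0 < x) : theta3 x = theta3 (4 * x) + theta2 (4 * x) := by
  have h4 : 0 < 4 * x := by linarith
  have h0 := hasSum_thetaM 0 0 h4
  have h1 := hasSum_thetaM (1 / 2) 0 h4
  rw [theta3_eq (4 * x), theta2_eq (4 * x), theta3]
  refine (hasSum_int_even_odd ?_ ?_).tsum_eq
  · convert h0 using 2 with n
    simp; ring_nf
  · convert h1 using 2 with n
    simp; ring_nf

lemma theta3_inv {x : ℝ} (hx : 0 < x) : theta3 (1 / x) = √x * theta3 x := by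
  have h := Real.tsum_exp_neg_mul_int_sq hx
  have e1 : (∑' n : ℤ, exp (-π * x * (n : ℝ) ^ 2)) = theta3 x := by
    unfold theta3; congr 1; ext n; ring_nf
  have e2 : (∑' n : ℤ, exp (-π / x * (n : ℝ) ^ 2)) = theta3 (1 / x) := by
    unfold theta3; congr 1; ext n; ring_nf
  rw [e1, e2, ← sqrt_eq_rpow] at h
  have : 0 < √x := sqrt_pos.2 hx
  rw [h]; field_simp

lemma theta3_anti {x y : ℝ} (hx : 0 < x) (hxy : x ≤ y) : theta3 y ≤ theta3 x := by
  rw [theta3_eq, theta3_eq]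
  refine (summable_thetaM 0 0 (hx.trans_le hxy)).tsum_le_tsum (fun n => ?_) (summable_thetaM 0 0 hx)
  refine mul_le_mul_of_nonneg_left (exp_le_exp.2 ?_) (by positivity)
  have : 0 ≤ π * ((n : ℝ) + 0) ^ 2 := by positivity
  nlinarith

lemma theta2_pos {x : ℝ} (hx : 0 < x) : 0 < theta2 x := by
  rw [theta2_eq]
  exact (summable_thetaM (1 / 2) 0 hx).tsum_pos (fun n => by positivity) 0 (by positivity)

lemma theta2_le_theta3 {x : ℝ} (hx : 0 < x) : theta2 x ≤ theta3 x := by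
  have h1 := theta3_split (x := x / 4) (by linarith)
  have h2 := theta3_inv (x := 4 / x) (by positivity)
  have h3 := theta3_inv (x := 1 / x) (by positivity)
  have h4 := theta3_anti (x := 1 / x) (y := 4 / x) (by positivity) (by gcongr; norm_num)
  have e : √(4 / x) = 2 * √(1 / x) := by
    rw [show 4 / x = 2 ^ 2 * (1 / x) by ring, sqrt_mul (by norm_num), sqrt_sq (by norm_num)]
  rw [one_div_div, e] at h2
  rw [one_div_one_div] at h3
  rw [show 4 * (x / 4) = x by ring] at h1
  have : 2 * √(1 / x) * theta3 (4 / x) ≤ 2 * √(1 / x) * theta3 (1 / x) := by gcongr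
  linarith

/-- The theta function of the rectangular lattice with aspect ratio `y`. -/
noncomputable def rectTheta (α y : ℝ) : ℝ := theta3 (y * α) * theta3 (α / y)

/-- The theta function of the centred rectangular (rhombic) lattice with aspect ratio `y`; the
hexagonal lattice is `y = √3`. -/
noncomputable def rhombTheta (α y : ℝ) : ℝ :=
  theta3 (y * α) * theta3 (α / y) + theta2 (y * α) * theta2 (α / y)

lemma rectTheta_inv {α y : ℝ} (hα : 0 < α) (hy : 0 < y) :
    rectTheta (1 / α) y = α * rectTheta α y := by
  have h1 := theta3_inv (x := y * α) (by positivity)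
  have h2 := theta3_inv (x := α / y) (by positivity)
  have e : √(y * α) * √(α / y) = α := by
    rw [← sqrt_mul (by positivity), show y * α * (α / y) = α ^ 2 by field_simp, sqrt_sq hα.le]
  unfold rectTheta
  rw [show y * (1 / α) = 1 / (α / y) by field_simp, show 1 / α / y = 1 / (y * α) by field_simp,
    h1, h2]
  linear_combination (theta3 (α / y) * theta3 (y * α)) * e

/-- The dual of a rhombic lattice is the same lattice, rotated and rescaled. -/
lemma rhombTheta_inv {α y : ℝ} (hα : 0 < α) (hy : 0 < y) :
    rhombTheta (4 / α) y = α / 2 * rhombTheta α y := by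
  have hA : 0 < y * α := by positivity
  have hB : 0 < α / y := by positivity
  have e : √(y * α) * √(α / y) = α := by
    rw [← sqrt_mul (by positivity), show y * α * (α / y) = α ^ 2 by field_simp, sqrt_sq hα.le]
  have half : ∀ x : ℝ, 0 < x → √(x / 4) = √x / 2 := fun x hx => by
    rw [sqrt_div' _ (by norm_num), show (4 : ℝ) = 2 ^ 2 by norm_num, sqrt_sq (by norm_num)]
  have two : ∀ x : ℝ, 0 < x → theta2 x = theta3 (x / 4) - theta3 x := fun x hx => by
    have := theta3_split (x := x / 4) (by linarith)
    rw [show 4 * (x / 4) = x by ring] at this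
    linarith
  unfold rhombTheta
  rw [show y * (4 / α) = 1 / ((α / y) / 4) by field_simp,
    show 4 / α / y = 1 / ((y * α) / 4) by field_simp,
    two _ (by positivity), two _ (by positivity), two _ hA, two _ hB,
    show 1 / ((α / y) / 4) / 4 = 1 / (α / y) by field_simp,
    show 1 / ((y * α) / 4) / 4 = 1 / (y * α) by field_simp,
    theta3_inv hA, theta3_inv hB, theta3_inv (x := y * α / 4) (by positivity),
    theta3_inv (x := α / y / 4) (by positivity), half _ hA, half _ hB]
  generalize theta3 (y * α) = a, theta3 (α / y) = b, theta3 (y * α / 4) = c,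
    theta3 (α / y / 4) = d at *
  linear_combination (a * b + c * d / 2 - b * c / 2 - a * d / 2) * e

/-! ### Vanishing of the first variation at the hexagonal lattice -/

lemma hasSum_thetaM_mul (s : ℝ) (i j : ℕ) {x y : ℝ} (hx : 0 < x) (hy : 0 < y) :
    HasSum (fun p : ℤ × ℤ =>
      ((π * ((p.1 : ℝ) + s) ^ 2) ^ i * exp (-π * ((p.1 : ℝ) + s) ^ 2 * x)) *
      ((π * ((p.2 : ℝ) + s) ^ 2) ^ j * exp (-π * ((p.2 : ℝ) + s) ^ 2 * y)))
      (thetaM s i x * thetaM s j y) :=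
  (hasSum_thetaM s i hx).mul (hasSum_thetaM s j hy)
    ((summable_thetaM s i hx).mul_of_nonneg (summable_thetaM s j hy)
      (fun _ => by positivity) (fun _ => by positivity))

/-- Every `(k, l) ∈ ℤ²` is uniquely `(2p, q - p)` or `(2p + 1, q - p)`. In these coordinates
`k² + kl + l²` becomes `3p² + q²`, respectively `3(p+1/2)² + (q+1/2)²`. -/
lemma hasSum_hex_split {f : ℤ × ℤ → ℝ} {a b : ℝ}
    (h0 : HasSum (fun p : ℤ × ℤ => f (2 * p.1, p.2 - p.1)) a)
    (h1 : HasSum (fun p : ℤ × ℤ => f (2 * p.1 + 1, p.2 - p.1)) b) : HasSum f (a + b) := by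
  have i0 : Function.Injective fun p : ℤ × ℤ => (2 * p.1, p.2 - p.1) := by
    rintro ⟨a, b⟩ ⟨c, d⟩ h
    simp only [Prod.mk.injEq] at h ⊢
    omega
  have i1 : Function.Injective fun p : ℤ × ℤ => (2 * p.1 + 1, p.2 - p.1) := by
    rintro ⟨a, b⟩ ⟨c, d⟩ h
    simp only [Prod.mk.injEq] at h ⊢
    omega
  refine (i0.hasSum_range_iff.2 h0).add_isCompl ?_ (i1.hasSum_range_iff.2 h1)
  constructor
  · rw [Set.disjoint_left]
    rintro _ ⟨p, rfl⟩ ⟨q, h⟩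
    simp only [Prod.mk.injEq] at h
    omega
  · refine codisjoint_iff.2 (Set.eq_univ_of_forall ?_)
    rintro ⟨k, l⟩
    rcases Int.even_or_odd' k with ⟨p, rfl | rfl⟩
    · exact Or.inl ⟨(p, l + p), by simp⟩
    · exact Or.inr ⟨(p, l + p), by simp⟩

/-- The order-three rotation `(k, l) ↦ (l, -k - l)` of the hexagonal lattice. -/
def hexRot : ℤ × ℤ ≃ ℤ × ℤ where
  toFun p := (p.2, -p.1 - p.2)
  invFun p := (-p.1 - p.2, p.1)
  left_inv p := Prod.ext (by simp; ring) (by simp)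
  right_inv p := Prod.ext (by simp) (by simp)

/-- The first variation of the hexagonal theta function in the aspect ratio vanishes: it sums
a quadratic form whose average over the orbits of the order-three rotation is zero. -/
lemma hex_critical {B : ℝ} (hB : 0 < B) :
    3 * (thetaM 0 1 (3 * B) * thetaM 0 0 B) - thetaM 0 0 (3 * B) * thetaM 0 1 B
    + (3 * (thetaM (1 / 2) 1 (3 * B) * thetaM (1 / 2) 0 B)
      - thetaM (1 / 2) 0 (3 * B) * thetaM (1 / 2) 1 B) = 0 := by
  have hA : 0 < 3 * B := by linarith
  set f : ℤ × ℤ → ℝ := fun p => π * ((p.1 : ℝ) ^ 2 / 2 - p.1 * p.2 - (p.2 : ℝ) ^ 2) *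
    exp (-π * ((p.1 : ℝ) ^ 2 + p.1 * p.2 + (p.2 : ℝ) ^ 2) * B) with hf
  have hs : ∀ s : ℝ, HasSum (fun p : ℤ × ℤ =>
      π * (3 * ((p.1 : ℝ) + s) ^ 2 - ((p.2 : ℝ) + s) ^ 2) *
        exp (-π * (3 * ((p.1 : ℝ) + s) ^ 2 + ((p.2 : ℝ) + s) ^ 2) * B))
      (3 * (thetaM s 1 (3 * B) * thetaM s 0 B) - thetaM s 0 (3 * B) * thetaM s 1 B) := by
    intro s
    refine (((hasSum_thetaM_mul s 1 0 hA hB).mul_left 3).sub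
      (hasSum_thetaM_mul s 0 1 hA hB)).congr_fun ?_
    intro p
    rw [show -π * (3 * ((p.1 : ℝ) + s) ^ 2 + ((p.2 : ℝ) + s) ^ 2) * B =
      -π * ((p.1 : ℝ) + s) ^ 2 * (3 * B) + -π * ((p.2 : ℝ) + s) ^ 2 * B by ring, exp_add]
    ring
  have hsum : HasSum f _ := hasSum_hex_split
    (a := 3 * (thetaM 0 1 (3 * B) * thetaM 0 0 B) - thetaM 0 0 (3 * B) * thetaM 0 1 B)
    (b := 3 * (thetaM (1 / 2) 1 (3 * B) * thetaM (1 / 2) 0 B)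
      - thetaM (1 / 2) 0 (3 * B) * thetaM (1 / 2) 1 B) (by
      convert hs 0 using 2 with p
      simp only [hf]
      push_cast
      ring_nf) (by
      convert hs (1 / 2) using 2 with p
      simp only [hf]
      push_cast
      ring_nf)
  have h1 := (hexRot.hasSum_iff (f := f)).2 hsum
  have h2 := (hexRot.hasSum_iff (f := f ∘ hexRot)).2 h1
  have h3 := (hsum.add h1).add h2
  have hz : ∀ p, f p + (f ∘ hexRot) p + (f ∘ hexRot ∘ hexRot) p = 0 := by
    rintro ⟨k, l⟩
    simp only [hf, hexRot, Function.comp, Equiv.coe_fn_mk]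
    push_cast
    rw [show ((l : ℝ) ^ 2 + l * (-k - l) + (-k - l) ^ 2) = (k : ℝ) ^ 2 + k * l + (l : ℝ) ^ 2 by ring,
      show ((-k - l : ℝ) ^ 2 + (-k - l) * (-l - (-k - l)) + (-l - (-k - l)) ^ 2)
        = (k : ℝ) ^ 2 + k * l + (l : ℝ) ^ 2 by ring]
    ring
  have h4 := h3.unique (hasSum_zero.congr_fun hz)
  linarith

/-! ### A Cauchy–Schwarz inequality for the moments -/

/-- Cauchy–Schwarz in discriminant form; for `s = 0` the term `n = 0` may be discarded from
`thetaM s 0`, which is the case `ε = 1`. -/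
lemma thetaM_sq_le (s ε : ℝ) (h : ε = 0 ∨ (ε = 1 ∧ s = 0)) {x : ℝ} (hx : 0 < x) :
    thetaM s 1 x ^ 2 ≤ (thetaM s 0 x - ε) * thetaM s 2 x := by
  have key : ∀ c : ℝ, 0 ≤ (thetaM s 0 x - ε) * (c * c) + (-2 * thetaM s 1 x) * c
      + thetaM s 2 x := by
    intro c
    have hs := (((hasSum_thetaM s 0 hx).mul_left (c * c)).add
      ((hasSum_thetaM s 1 hx).mul_left (-2 * c))).add (hasSum_thetaM s 2 hx)
    have hsq : ∀ n : ℤ, c * c * ((π * ((n : ℝ) + s) ^ 2) ^ 0 * exp (-π * ((n : ℝ) + s) ^ 2 * x)) +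
        -2 * c * ((π * ((n : ℝ) + s) ^ 2) ^ 1 * exp (-π * ((n : ℝ) + s) ^ 2 * x)) +
        (π * ((n : ℝ) + s) ^ 2) ^ 2 * exp (-π * ((n : ℝ) + s) ^ 2 * x)
        = (c - π * ((n : ℝ) + s) ^ 2) ^ 2 * exp (-π * ((n : ℝ) + s) ^ 2 * x) := fun n => by ring
    simp only [hsq] at hs
    rcases h with rfl | ⟨rfl, rfl⟩
    · have := hs.nonneg fun n => by positivity
      linarith
    · have := le_hasSum hs 0 fun n _ => by positivity
      simp at this
      linarith
  have := discrim_le_zero key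
  unfold discrim at this
  linarith

/-- The quadratic terms in the second variation are nonnegative. -/
lemma second_variation_quadratic (s ε : ℝ) (h : ε = 0 ∨ (ε = 1 ∧ s = 0))
    (h0 : ∀ x, 0 < x → ε ≤ thetaM s 0 x) {A B y : ℝ} (hA : 0 < A) (hB : 0 < B) (hy : 0 < y) :
    0 ≤ y ^ 2 * thetaM s 2 A * thetaM s 0 B - 2 * (thetaM s 1 A * thetaM s 1 B)
      + (thetaM s 0 A - ε) * thetaM s 2 B / y ^ 2 := by
  have h1 := thetaM_sq_le s ε h hA
  have h2 := thetaM_sq_le s 0 (Or.inl rfl) hB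
  rw [sub_zero] at h2
  have e := sub_nonneg.2 (h0 A hA)
  have n0 := thetaM_nonneg s 0 B
  have n1 := thetaM_nonneg s 1 A
  have n2 := thetaM_nonneg s 1 B
  have n3 := thetaM_nonneg s 2 A
  have n4 := thetaM_nonneg s 2 B
  set X := y ^ 2 * thetaM s 2 A * thetaM s 0 B with hX
  set Y := (thetaM s 0 A - ε) * thetaM s 2 B / y ^ 2 with hY
  have hXY : (thetaM s 1 A * thetaM s 1 B) ^ 2 ≤ X * Y := by
    have : X * Y = ((thetaM s 0 A - ε) * thetaM s 2 A) * (thetaM s 0 B * thetaM s 2 B) := by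
      rw [hX, hY]; field_simp
    rw [this, mul_pow]
    exact mul_le_mul h1 h2 (by positivity) (by positivity)
  have hX0 : 0 ≤ X := by positivity
  have hY0 : 0 ≤ Y := by positivity
  have : 2 * (thetaM s 1 A * thetaM s 1 B) ≤ X + Y :=
    abs_le_of_sq_le_sq' (by nlinarith [sq_nonneg (X - Y)]) (by positivity) |>.2
  linarith

/-! ### Bounds for the moments -/

lemma summable_nat_thetaM_zero (j : ℕ) {x : ℝ} (hx : 0 < x) : Summable fun n : ℕ =>
    (π * ((n : ℝ) + 1) ^ 2) ^ j * exp (-π * ((n : ℝ) + 1) ^ 2 * x) := by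
  simpa [Function.comp_def] using (summable_thetaM 0 j hx).comp_injective
    (i := fun n : ℕ => (n : ℤ) + 1) (fun a b h => by simpa using h)

lemma summable_nat_thetaM_half (j : ℕ) {x : ℝ} (hx : 0 < x) : Summable fun n : ℕ =>
    (π * ((n : ℝ) + 1 / 2) ^ 2) ^ j * exp (-π * ((n : ℝ) + 1 / 2) ^ 2 * x) := by
  simpa [Function.comp_def] using (summable_thetaM (1 / 2) j hx).comp_injective
    (i := fun n : ℕ => (n : ℤ)) (fun a b h => by simpa using h)

lemma thetaM_zero_eq (j : ℕ) {x : ℝ} (hx : 0 < x) : thetaM 0 j x =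
    2 * (∑' n : ℕ, (π * ((n : ℝ) + 1) ^ 2) ^ j * exp (-π * ((n : ℝ) + 1) ^ 2 * x)) + 0 ^ j := by
  have hs := (summable_nat_thetaM_zero j hx).hasSum
  have h := (hasSum_thetaM 0 j hx).unique (HasSum.of_add_one_of_neg_add_one
    (hs.congr_fun fun n => ?_) (hs.congr_fun fun n => ?_))
  · rw [h, show (π * (((0 : ℤ) : ℝ) + 0) ^ 2) ^ j * exp (-π * (((0 : ℤ) : ℝ) + 0) ^ 2 * x) = 0 ^ j
      by simp]
    ring
  · rw [show (((n : ℤ) + 1 : ℤ) : ℝ) + 0 = (n : ℝ) + 1 by push_cast; ring]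
  · rw [show (((-((n : ℤ) + 1) : ℤ) : ℝ) + 0) ^ 2 = ((n : ℝ) + 1) ^ 2 by push_cast; ring]

lemma thetaM_half_eq (j : ℕ) {x : ℝ} (hx : 0 < x) : thetaM (1 / 2) j x =
    2 * (∑' n : ℕ, (π * ((n : ℝ) + 1 / 2) ^ 2) ^ j * exp (-π * ((n : ℝ) + 1 / 2) ^ 2 * x)) := by
  have hs := (summable_nat_thetaM_half j hx).hasSum
  have h := (hasSum_thetaM (1 / 2) j hx).unique (HasSum.of_nat_of_neg_add_one
    (hs.congr_fun fun n => ?_) (hs.congr_fun fun n => ?_))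
  · rw [h]
    ring
  · rw [Int.cast_natCast]
  · rw [show (((-((n : ℤ) + 1) : ℤ) : ℝ) + 1 / 2) ^ 2 = ((n : ℝ) + 1 / 2) ^ 2 by push_cast; ring]

lemma tsum_le_geometric {g : ℕ → ℝ} (hg : Summable g) {c r : ℝ} (hr0 : 0 ≤ r) (hr1 : r < 1)
    (h : ∀ n, g n ≤ c * r ^ n) : ∑' n, g n ≤ c / (1 - r) := by
  have h2 := (hasSum_geometric_of_lt_one hr0 hr1).mul_left c
  rw [div_eq_mul_inv, ← h2.tsum_eq]
  exact hg.tsum_le_tsum h h2.summable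

lemma one_div_one_sub_exp_neg_le {p : ℝ} (hp : 0 < p) : 1 / (1 - exp (-p)) ≤ 1 + 1 / p := by
  have h1 : exp (-p) < 1 := by simpa using hp
  have h2 : exp (-p) * (1 + p) ≤ 1 := by
    calc exp (-p) * (1 + p) ≤ exp (-p) * exp p := by
          gcongr; linarith [add_one_le_exp p]
      _ = 1 := by rw [← exp_add]; simp
  rw [div_le_iff₀ (by linarith)]
  have : 0 ≤ (1 - exp (-p) * (1 + p)) / p := by apply div_nonneg <;> linarith
  have e : (1 + 1 / p) * (1 - exp (-p)) = 1 + (1 - exp (-p) * (1 + p)) / p := by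
    field_simp; ring
  linarith

lemma theta3_upper {x : ℝ} (hx : 0 < x) : thetaM 0 0 x ≤ 1 + 2 / (π * x) := by
  have hp : 0 < π * x := by positivity
  have h1 : exp (-(π * x)) < 1 := by simpa using hp
  have hb := tsum_le_geometric (summable_nat_thetaM_zero 0 hx) (c := exp (-(π * x)))
    (r := exp (-(π * x))) (exp_pos _).le h1 (fun n => by
      rw [pow_zero, one_mul, ← exp_nat_mul, ← exp_add]
      apply exp_le_exp.2
      have : (0 : ℝ) ≤ n := n.cast_nonneg
      nlinarith [mul_nonneg this hp.le, mul_nonneg (mul_nonneg this this) hp.le])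
  have h2 := one_div_one_sub_exp_neg_le hp
  rw [thetaM_zero_eq 0 hx]
  have e : exp (-(π * x)) / (1 - exp (-(π * x))) = 1 / (1 - exp (-(π * x))) - 1 := by
    have : 1 - exp (-(π * x)) ≠ 0 := by linarith
    field_simp; ring
  rw [show 2 / (π * x) = 2 * (1 / (π * x)) by ring, pow_zero]
  linarith

lemma theta2_upper {x : ℝ} (hx : 0 < x) :
    thetaM (1 / 2) 0 x ≤ 2 * exp (-(π * x / 4)) * (1 + 1 / (2 * (π * x))) := by
  have hp : 0 < π * x := by positivity
  have h1 : exp (-(2 * (π * x))) < 1 := by simpa using hp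
  have hb := tsum_le_geometric (summable_nat_thetaM_half 0 hx) (c := exp (-(π * x / 4)))
    (r := exp (-(2 * (π * x)))) (exp_pos _).le h1 (fun n => by
      rw [pow_zero, one_mul, ← exp_nat_mul, ← exp_add]
      apply exp_le_exp.2
      -- `n² ≥ n` for natural numbers
      have : (n : ℝ) ≤ (n : ℝ) ^ 2 := by exact_mod_cast Nat.le_self_pow (by norm_num) n
      nlinarith [mul_le_mul_of_nonneg_left this hp.le])
  have h2 := one_div_one_sub_exp_neg_le (p := 2 * (π * x)) (by positivity)
  rw [thetaM_half_eq 0 hx]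
  have h3 : exp (-(π * x / 4)) / (1 - exp (-(2 * (π * x)))) ≤
      exp (-(π * x / 4)) * (1 + 1 / (2 * (π * x))) := by
    rw [div_eq_mul_one_div]; gcongr
  linarith

lemma exp_neg_two_pi_le {x : ℝ} (hx : 3 / 2 ≤ x) : exp (-(2 * (π * x))) ≤ 1 / 7600 := by
  have h1 : exp (-(2 * (π * x))) ≤ exp (-9) := by
    apply exp_le_exp.2; nlinarith [pi_gt_three]
  have h2 : (7600 : ℝ) ≤ exp 9 := by
    have : exp 9 = exp 1 ^ 9 := by rw [← exp_nat_mul]; norm_num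
    rw [this]
    calc (7600 : ℝ) ≤ (2.7 : ℝ) ^ 9 := by norm_num
      _ ≤ exp 1 ^ 9 := by gcongr; linarith [exp_one_gt_d9]
  refine h1.trans ?_
  rw [exp_neg, ← one_div]
  gcongr

lemma theta3_moment_upper {x : ℝ} (hx : 3 / 2 ≤ x) :
    thetaM 0 1 x ≤ 500 / 499 * (2 * π * exp (-(π * x))) := by
  have hx0 : 0 < x := by linarith
  have hp : 0 < π * x := by positivity
  have hb := tsum_le_geometric (summable_nat_thetaM_zero 1 hx0) (c := π * exp (-(π * x)))
    (r := 1 / 500) (by norm_num) (by norm_num) (fun n => by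
      have h4 : ((n : ℝ) + 1) ^ 2 ≤ 4 ^ n := by
        have : (n : ℝ) + 1 ≤ 2 ^ n := by exact_mod_cast Nat.lt_two_pow_self
        calc ((n : ℝ) + 1) ^ 2 ≤ (2 ^ n) ^ 2 := by gcongr
          _ = 4 ^ n := by rw [← pow_mul, mul_comm, pow_mul]; norm_num
      have he : exp (-π * ((n : ℝ) + 1) ^ 2 * x) ≤
          exp (-(π * x)) * exp (-(2 * (π * x))) ^ n := by
        rw [← exp_nat_mul, ← exp_add]
        apply exp_le_exp.2
        nlinarith [mul_nonneg (sq_nonneg (n : ℝ)) hp.le]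
      calc (π * ((n : ℝ) + 1) ^ 2) ^ 1 * exp (-π * ((n : ℝ) + 1) ^ 2 * x)
          ≤ π * 4 ^ n * (exp (-(π * x)) * (1 / 7600) ^ n) := by
            rw [pow_one]
            refine mul_le_mul (by gcongr) (he.trans ?_) (by positivity) (by positivity)
            gcongr
            exact exp_neg_two_pi_le hx
        _ = π * exp (-(π * x)) * (4 / 7600) ^ n := by rw [div_pow, div_pow]; ring
        _ ≤ π * exp (-(π * x)) * (1 / 500) ^ n := by gcongr ?_ * ?_ ^ n; norm_num)
  rw [thetaM_zero_eq 1 hx0]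
  have : π * exp (-(π * x)) / (1 - 1 / 500) = 500 / 499 * (π * exp (-(π * x))) := by ring
  rw [pow_one]
  linarith

lemma theta2_moment_upper {x : ℝ} (hx : 3 / 2 ≤ x) :
    thetaM (1 / 2) 1 x ≤ 500 / 499 * (π / 2 * exp (-(π * x / 4))) := by
  have hx0 : 0 < x := by linarith
  have hp : 0 < π * x := by positivity
  have hb := tsum_le_geometric (summable_nat_thetaM_half 1 hx0) (c := π / 4 * exp (-(π * x / 4)))
    (r := 1 / 500) (by norm_num) (by norm_num) (fun n => by
      have h4 : ((n : ℝ) + 1 / 2) ^ 2 ≤ 9 ^ n / 4 := by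
        have : (2 * (n : ℝ) + 1) ≤ 3 ^ n := by
          have := one_add_mul_le_pow (a := (2 : ℝ)) (by norm_num) n
          norm_num at this
          linarith
        have : (2 * (n : ℝ) + 1) ^ 2 ≤ 9 ^ n := by
          calc (2 * (n : ℝ) + 1) ^ 2 ≤ (3 ^ n) ^ 2 := by gcongr
            _ = 9 ^ n := by rw [← pow_mul, mul_comm, pow_mul]; norm_num
        linarith
      have he : exp (-π * ((n : ℝ) + 1 / 2) ^ 2 * x) ≤
          exp (-(π * x / 4)) * exp (-(2 * (π * x))) ^ n := by
        rw [← exp_nat_mul, ← exp_add]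
        apply exp_le_exp.2
        have : (n : ℝ) ≤ (n : ℝ) ^ 2 := by exact_mod_cast Nat.le_self_pow (by norm_num) n
        nlinarith [mul_le_mul_of_nonneg_left this hp.le]
      calc (π * ((n : ℝ) + 1 / 2) ^ 2) ^ 1 * exp (-π * ((n : ℝ) + 1 / 2) ^ 2 * x)
          ≤ π * (9 ^ n / 4) * (exp (-(π * x / 4)) * (1 / 7600) ^ n) := by
            rw [pow_one]
            refine mul_le_mul (by gcongr) (he.trans ?_) (by positivity) (by positivity)
            gcongr
            exact exp_neg_two_pi_le hx
        _ = π / 4 * exp (-(π * x / 4)) * (9 / 7600) ^ n := by rw [div_pow, div_pow]; ring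
        _ ≤ π / 4 * exp (-(π * x / 4)) * (1 / 500) ^ n := by gcongr ?_ * ?_ ^ n; norm_num)
  rw [thetaM_half_eq 1 hx0]
  have : π / 4 * exp (-(π * x / 4)) / (1 - 1 / 500)
    = 500 / 499 * (π / 4 * exp (-(π * x / 4))) := by ring
  linarith

lemma thetaM_zero_lower (j : ℕ) {x : ℝ} (hx : 0 < x) :
    2 * (π ^ j * exp (-(π * x))) + 0 ^ j ≤ thetaM 0 j x := by
  rw [thetaM_zero_eq j hx]
  have := (summable_nat_thetaM_zero j hx).le_tsum 0 (fun n _ => by positivity)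
  simp only [Nat.cast_zero, zero_add, one_pow, mul_one, neg_mul] at this
  simp only [neg_mul]
  linarith

lemma one_le_theta3 {x : ℝ} (hx : 0 < x) : 1 ≤ thetaM 0 0 x := by
  have := thetaM_zero_lower 0 hx
  have := exp_pos (-(π * x))
  simp only [pow_zero] at *
  linarith

/-! ### The two key inequalities -/

/-- The one-variable inequality behind the second variation. With `v = π(y - 3/y)/2` the bound
`e^v ≥ (1 + v/4)⁴` reduces it to a polynomial inequality, whose expansion around `y = 1.732` has
positive coefficients. -/
lemma exp_variation_bound {y : ℝ} (hy : 1.732 ≤ y) (hy3 : 3 ≤ y ^ 2) :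
    1.01 * y ^ 3 * (0.5 + 0.04 * y) < π * exp (π * (y - 3 / y) / 2) := by
  have hy0 : 0 < y := by linarith
  have hu : 0 ≤ (y ^ 2 - 3) / y := div_nonneg (by linarith) hy0.le
  have hpi := pi_gt_d2
  have h1 : 1 + 0.3925 * ((y ^ 2 - 3) / y) ≤ exp (π * (y - 3 / y) / 8) := by
    have e : π * (y - 3 / y) / 8 = π / 8 * ((y ^ 2 - 3) / y) := by field_simp
    have := add_one_le_exp (π * (y - 3 / y) / 8)
    rw [e] at this ⊢
    nlinarith
  have h2 : (1 + 0.3925 * ((y ^ 2 - 3) / y)) ^ 4 ≤ exp (π * (y - 3 / y) / 2) := by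
    calc _ ≤ exp (π * (y - 3 / y) / 8) ^ 4 := by gcongr
      _ = _ := by rw [← exp_nat_mul]; congr 1; push_cast; ring
  have h3 : 1.01 * y ^ 7 * (0.5 + 0.04 * y) < 3.14 * (y + 0.3925 * (y ^ 2 - 3)) ^ 4 := by
    obtain ⟨t, ht, rfl⟩ : ∃ t : ℝ, 0 ≤ t ∧ y = 1.732 + t := ⟨y - 1.732, by linarith, by ring⟩
    rw [← sub_pos]
    ring_nf
    positivity
  have h4 : (y + 0.3925 * (y ^ 2 - 3)) ^ 4 = y ^ 4 * (1 + 0.3925 * ((y ^ 2 - 3) / y)) ^ 4 := by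
    rw [← mul_pow]; congr 1; field_simp
  rw [h4] at h3
  have h5 : 1.01 * y ^ 3 * (0.5 + 0.04 * y) <
      3.14 * (1 + 0.3925 * ((y ^ 2 - 3) / y)) ^ 4 := by
    have : 0 < y ^ 4 := by positivity
    by_contra hc
    push Not at hc
    nlinarith [mul_le_mul_of_nonneg_left hc this.le]
  have h6 : 0 < exp (π * (y - 3 / y) / 2) := exp_pos _
  nlinarith

lemma sqrt_three_le {y : ℝ} (hy : √3 ≤ y) : 1.732 ≤ y ∧ 3 ≤ y ^ 2 := by
  have h1 : (1.732 : ℝ) ≤ √3 := le_sqrt_of_sq_le (by norm_num)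
  exact ⟨h1.trans hy, (sqrt_le_left (by linarith)).1 hy⟩

/-- The numerical core of the second variation bound: `exp_variation_bound` at general `α ≥ 2`. -/
lemma row_dominates {α y : ℝ} (hα : 2 ≤ α) (hy : √3 ≤ y) :
    1.01 * (y * α * (1 + 1 / (2 * (π * (α / y))))) <
      π * (α / y) ^ 2 * exp (π * (y * α - 3 * (α / y)) / 4) := by
  obtain ⟨hy1, hy3⟩ := sqrt_three_le hy
  have hy0 : 0 < y := by linarith
  have hα0 : 0 < α := by linarith
  have hpi := pi_gt_d2
  have hv : exp (π * (y - 3 / y) / 2) ≤ exp (π * (y * α - 3 * (α / y)) / 4) := by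
    apply exp_le_exp.2
    have e : y * α - 3 * (α / y) = α * (y - 3 / y) := by ring
    have h0 : 0 ≤ y - 3 / y := by
      rw [show y - 3 / y = (y ^ 2 - 3) / y by field_simp]
      exact div_nonneg (by linarith) hy0.le
    rw [e]
    nlinarith [mul_nonneg pi_pos.le h0]
  have hk := exp_variation_bound hy1 hy3
  have hAg : y * α * (1 + 1 / (2 * (π * (α / y)))) = α * y + y ^ 2 / (2 * π) := by
    field_simp
  have h16 : y ^ 2 / (2 * π) ≤ 0.16 * y ^ 2 := by
    rw [div_le_iff₀ (by positivity)]
    nlinarith [sq_nonneg y]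
  have hB2 : 0 < (α / y) ^ 2 := by positivity
  have s1 := mul_lt_mul_of_pos_left hk hB2
  have s2 : (α / y) ^ 2 * (1.01 * y ^ 3 * (0.5 + 0.04 * y)) =
      1.01 * (0.5 * α ^ 2 * y + 0.04 * α ^ 2 * y ^ 2) := by
    rw [div_pow]; field_simp
  have s3 := mul_le_mul_of_nonneg_left hv (mul_pos pi_pos hB2).le
  have s4 : α * y ≤ 0.5 * α ^ 2 * y := by nlinarith [mul_pos hα0 hy0]
  have s5 : 0.16 * y ^ 2 ≤ 0.04 * α ^ 2 * y ^ 2 := by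
    have : 4 ≤ α ^ 2 := by nlinarith
    nlinarith [sq_nonneg y]
  rw [hAg]
  refine lt_of_lt_of_le ?_ s3
  linarith

/-- The term `(α/y)² θ₃''(α/y)`, which comes from the row through the origin and is left over by
Cauchy–Schwarz, dominates the negative terms of the second variation. -/
lemma second_variation_bound {α y : ℝ} (hα : 2 ≤ α) (hy : √3 ≤ y) :
    2 * (y * α) * (thetaM 0 1 (y * α) * thetaM 0 0 (α / y)
      + thetaM (1 / 2) 1 (y * α) * thetaM (1 / 2) 0 (α / y))
      < (α / y) ^ 2 * thetaM 0 2 (α / y) := by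
  obtain ⟨hy1, hy3⟩ := sqrt_three_le hy
  have hy0 : 0 < y := by linarith
  have hα0 : 0 < α := by linarith
  have hpi := pi_gt_d2
  set A := y * α with hA
  set B := α / y with hB
  have hB0 : 0 < B := by positivity
  have hA1 : 3.464 ≤ A := by rw [hA]; nlinarith
  have hA0 : 0 < A := by linarith
  have hAB : 3 * B ≤ A := by
    have : B * y ^ 2 = A := by rw [hA, hB]; field_simp
    nlinarith
  set g := 1 + 1 / (2 * (π * B)) with hg
  have hg0 : 0 < g := by positivity
  set E := exp (-(π * A / 4)) * exp (-(π * B / 4)) with hE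
  have hE0 : 0 < E := by positivity
  have b1 : thetaM (1 / 2) 1 A * thetaM (1 / 2) 0 B ≤ 500 / 499 * (π * E * g) := by
    calc _ ≤ (500 / 499 * (π / 2 * exp (-(π * A / 4)))) * (2 * exp (-(π * B / 4)) * g) :=
          mul_le_mul (theta2_moment_upper (by linarith)) (theta2_upper hB0) (thetaM_nonneg _ _ _)
            (by positivity)
      _ = _ := by rw [hE]; ring
  have bE : exp (-(π * A)) ≤ E * (1 / 1090) := by
    have h7 : (1090 : ℝ) ≤ exp 7 := by
      have : exp 7 = exp 1 ^ 7 := by rw [← exp_nat_mul]; norm_num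
      rw [this]
      calc (1090 : ℝ) ≤ (2.718 : ℝ) ^ 7 := by norm_num
        _ ≤ exp 1 ^ 7 := by gcongr; linarith [exp_one_gt_d9]
    have h8 : exp (-(π * A)) ≤ E * exp (-7) := by
      rw [hE, ← exp_add, ← exp_add]
      apply exp_le_exp.2
      nlinarith
    refine h8.trans (mul_le_mul_of_nonneg_left ?_ hE0.le)
    rw [exp_neg, ← one_div]
    gcongr
  have b2 : thetaM 0 1 A * thetaM 0 0 B ≤ 500 / 499 * (π * E * g) * (8 / 1090) := by
    have hB4 : thetaM 0 0 B ≤ 4 * g := by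
      refine (theta3_upper hB0).trans ?_
      rw [hg, show 4 * (1 + 1 / (2 * (π * B))) = 4 + 2 / (π * B) by field_simp; ring]
      linarith
    calc _ ≤ (500 / 499 * (2 * π * (E * (1 / 1090)))) * (4 * g) := by
          refine mul_le_mul ((theta3_moment_upper (by linarith)).trans ?_) hB4
            (thetaM_nonneg _ _ _) (by positivity)
          gcongr
      _ = _ := by ring
  have b3 := thetaM_zero_lower 2 hB0
  have main : 1.01 * (A * g) * E < π * B ^ 2 * exp (-(π * B)) := by
    have hexp : E * exp (π * (A - 3 * B) / 4) = exp (-(π * B)) := by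
      rw [hE, ← exp_add, ← exp_add]; congr 1; ring
    have h5 : 1.01 * (A * g) < π * B ^ 2 * exp (π * (A - 3 * B) / 4) := row_dominates hα hy
    rw [← hexp]
    calc 1.01 * (A * g) * E < π * B ^ 2 * exp (π * (A - 3 * B) / 4) * E :=
          mul_lt_mul_of_pos_right h5 hE0
      _ = _ := by ring
  have hsum : thetaM 0 1 A * thetaM 0 0 B + thetaM (1 / 2) 1 A * thetaM (1 / 2) 0 B
      ≤ 1.01 * (π * E * g) := by
    have : 0 < π * E * g := by positivity
    linarith
  calc _ ≤ 2 * A * (1.01 * (π * E * g)) := by gcongr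
    _ = 2 * π * (1.01 * (A * g) * E) := by ring
    _ < 2 * π * (π * B ^ 2 * exp (-(π * B))) := mul_lt_mul_of_pos_left main (by positivity)
    _ = B ^ 2 * (2 * (π ^ 2 * exp (-(π * B))) + 0 ^ 2) := by ring
    _ ≤ _ := by gcongr

/-- The first variation of the rectangular theta function is nonnegative for `α ≥ 1` and `y ≥ √3`. -/
lemma rect_variation_bound {α y : ℝ} (hα : 1 ≤ α) (hy : √3 ≤ y) :
    y * α * (thetaM 0 1 (y * α) * thetaM 0 0 (α / y))
      ≤ α / y * (thetaM 0 0 (y * α) * thetaM 0 1 (α / y)) := by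
  obtain ⟨hy1, hy3⟩ := sqrt_three_le hy
  have hy0 : 0 < y := by linarith
  have hα0 : 0 < α := by linarith
  have hpi := pi_gt_d2
  set A := y * α with hA
  set B := α / y with hB
  have hB0 : 0 < B := by positivity
  have hA1 : 1.732 ≤ A := by rw [hA]; nlinarith
  have hA0 : 0 < A := by linarith
  have b1 : thetaM 0 1 A * thetaM 0 0 B ≤
      500 / 499 * (2 * π * exp (-(π * A))) * (1 + 2 / (π * B)) :=
    mul_le_mul (theta3_moment_upper (by linarith)) (theta3_upper hB0) (thetaM_nonneg _ _ _)
      (by positivity)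
  have b2 : 2 * π * exp (-(π * B)) ≤ thetaM 0 0 A * thetaM 0 1 B := by
    have h1 := one_le_theta3 hA0
    have h2 := thetaM_zero_lower 1 hB0
    have h3 := exp_pos (-(π * B))
    simp only [pow_one, add_zero] at h2
    nlinarith [mul_pos pi_pos h3]
  have hexp : exp (2 * y) * exp (-(π * A)) ≤ exp (-(π * B)) := by
    rw [← exp_add]
    apply exp_le_exp.2
    have hAB : 3 * B ≤ A := by
      have : B * y ^ 2 = A := by rw [hA, hB]; field_simp
      nlinarith
    have : y ≤ A := by rw [hA]; nlinarith
    nlinarith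
  have hpoly : 1.01 * (y ^ 2 + 0.64 * y ^ 3) ≤ exp (2 * y) := by
    have h1 : (1 + y / 2) ^ 4 ≤ exp (2 * y) := by
      calc (1 + y / 2) ^ 4 ≤ exp (y / 2) ^ 4 := by
            gcongr; linarith [add_one_le_exp (y / 2)]
        _ = _ := by rw [← exp_nat_mul]; congr 1; push_cast; ring
    nlinarith [sq_nonneg (y ^ 2 - 1.2 * y), sq_nonneg y]
  have h2 : 1.01 * (A * (1 + 2 / (π * B))) ≤ B * exp (2 * y) := by
    have e : A * (1 + 2 / (π * B)) = α * y + 2 / π * y ^ 2 := by rw [hA, hB]; field_simp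
    have h3 : 2 / π ≤ 0.64 := by rw [div_le_iff₀ pi_pos]; linarith
    have h4 : B * (1.01 * (y ^ 2 + 0.64 * y ^ 3)) = 1.01 * (α * y + 0.64 * α * y ^ 2) := by
      rw [hB]; field_simp
    have h5 := mul_le_mul_of_nonneg_left hpoly hB0.le
    rw [e]
    nlinarith [sq_nonneg y, mul_le_mul_of_nonneg_right h3 (sq_nonneg y),
      mul_le_mul_of_nonneg_right hα (sq_nonneg y)]
  have hA' := exp_pos (-(π * A))
  calc A * (thetaM 0 1 A * thetaM 0 0 B)
      ≤ A * (500 / 499 * (2 * π * exp (-(π * A))) * (1 + 2 / (π * B))) := by gcongr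
    _ = 500 / 499 * (A * (1 + 2 / (π * B))) * (2 * π * exp (-(π * A))) := by ring
    _ ≤ 1.01 * (A * (1 + 2 / (π * B))) * (2 * π * exp (-(π * A))) := by gcongr; norm_num
    _ ≤ B * exp (2 * y) * (2 * π * exp (-(π * A))) := by gcongr
    _ = B * (2 * π * (exp (2 * y) * exp (-(π * A)))) := by ring
    _ ≤ B * (2 * π * exp (-(π * B))) := by gcongr
    _ ≤ _ := by gcongr

/-! ### Monotonicity -/

/-- `y²` times the derivative in `y` of the product of two theta functions with shift `s`. -/
noncomputable def variation (s α y : ℝ) : ℝ :=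
  α * (thetaM s 0 (y * α) * thetaM s 1 (α / y) - y ^ 2 * (thetaM s 1 (y * α) * thetaM s 0 (α / y)))

lemma hasDerivAt_thetaM_mul (s : ℝ) (j : ℕ) {α y : ℝ} (hα : 0 < α) (hy : 0 < y) :
    HasDerivAt (fun z => thetaM s j (z * α)) (-thetaM s (j + 1) (y * α) * α) y := by
  have h := (hasDerivAt_thetaM s j (x := y * α) (by positivity)).comp y
    ((hasDerivAt_id y).mul_const α)
  simpa [Function.comp_def] using h

lemma hasDerivAt_thetaM_div (s : ℝ) (j : ℕ) {α y : ℝ} (hα : 0 < α) (hy : 0 < y) :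
    HasDerivAt (fun z => thetaM s j (α / z)) (thetaM s (j + 1) (α / y) * (α / y ^ 2)) y := by
  have h := (hasDerivAt_thetaM s j (x := α / y) (by positivity)).comp y
    ((hasDerivAt_inv hy.ne').const_mul α)
  refine (h.congr_deriv ?_)
  ring

lemma hasDerivAt_pair (s : ℝ) {α y : ℝ} (hα : 0 < α) (hy : 0 < y) :
    HasDerivAt (fun z => thetaM s 0 (z * α) * thetaM s 0 (α / z)) (variation s α y / y ^ 2) y := by
  refine ((hasDerivAt_thetaM_mul s 0 hα hy).mul (hasDerivAt_thetaM_div s 0 hα hy)).congr_deriv ?_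
  unfold variation
  field_simp
  ring

lemma hasDerivAt_variation (s : ℝ) {α y : ℝ} (hα : 0 < α) (hy : 0 < y) :
    HasDerivAt (variation s α)
      (α * (α * (y ^ 2 * thetaM s 2 (y * α) * thetaM s 0 (α / y)
          - 2 * (thetaM s 1 (y * α) * thetaM s 1 (α / y))
          + thetaM s 0 (y * α) * thetaM s 2 (α / y) / y ^ 2)
        - 2 * y * (thetaM s 1 (y * α) * thetaM s 0 (α / y)))) y := by
  have h1 := (hasDerivAt_thetaM_mul s 0 hα hy).mul (hasDerivAt_thetaM_div s 1 hα hy)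
  have h2 := (hasDerivAt_thetaM_mul s 1 hα hy).mul (hasDerivAt_thetaM_div s 0 hα hy)
  refine ((h1.sub ((hasDerivAt_pow 2 y).mul h2)).const_mul α).congr_deriv ?_
  simp only [Pi.mul_apply, zero_add, Nat.reduceAdd, Nat.cast_ofNat, Nat.add_one_sub_one,
    pow_one]
  field_simp
  ring

lemma variation_hex {α : ℝ} (hα : 0 < α) :
    variation 0 α √3 + variation (1 / 2) α √3 = 0 := by
  have h3 : (√3 : ℝ) ^ 2 = 3 := sq_sqrt (by norm_num)
  have hs : 0 < √(3 : ℝ) := sqrt_pos.2 (by norm_num)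
  have h := hex_critical (B := α / √3) (by positivity)
  have e : 3 * (α / √3) = √3 * α := by
    field_simp; linarith
  rw [e] at h
  unfold variation
  rw [h3]
  linear_combination -α * h

lemma variation_strictMono {α : ℝ} (hα : 2 ≤ α) :
    StrictMonoOn (fun y => variation 0 α y + variation (1 / 2) α y) (Set.Ici √3) := by
  have hα0 : 0 < α := by linarith
  have hpos : ∀ y : ℝ, √3 ≤ y → 0 < y := fun y hy => by linarith [(sqrt_three_le hy).1]
  have hd := fun (y : ℝ) (hy : √3 ≤ y) =>
    (hasDerivAt_variation 0 hα0 (hpos y hy)).add (hasDerivAt_variation (1 / 2) hα0 (hpos y hy))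
  refine strictMonoOn_of_deriv_pos (convex_Ici _)
    (fun y hy => (hd y hy).continuousAt.continuousWithinAt) fun y hy => ?_
  have hy : √3 ≤ y := interior_subset hy
  have hy0 := hpos y hy
  have hA : 0 < y * α := by positivity
  have hB : 0 < α / y := by positivity
  have q0 := second_variation_quadratic 0 1 (Or.inr ⟨rfl, rfl⟩) (fun x hx => one_le_theta3 hx)
    hA hB hy0
  have q1 := second_variation_quadratic (1 / 2) 0 (Or.inl rfl) (fun x _ => thetaM_nonneg _ _ x)
    hA hB hy0
  have b := second_variation_bound hα hy
  have e1 : (thetaM 0 0 (y * α) - 1) * thetaM 0 2 (α / y) / y ^ 2 =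
      thetaM 0 0 (y * α) * thetaM 0 2 (α / y) / y ^ 2 - thetaM 0 2 (α / y) / y ^ 2 := by ring
  rw [e1] at q0
  rw [sub_zero] at q1
  have e2 : (α / y) ^ 2 * thetaM 0 2 (α / y) = α * (α * (thetaM 0 2 (α / y) / y ^ 2)) := by
    rw [div_pow]; ring
  rw [e2] at b
  have q0' := mul_nonneg (mul_pos hα0 hα0).le q0
  have q1' := mul_nonneg (mul_pos hα0 hα0).le q1
  refine lt_of_lt_of_eq ?_ (hd y hy).deriv.symm
  linarith

lemma rhombTheta_eq (α y : ℝ) : rhombTheta α y =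
    thetaM 0 0 (y * α) * thetaM 0 0 (α / y)
      + thetaM (1 / 2) 0 (y * α) * thetaM (1 / 2) 0 (α / y) := by
  simp only [rhombTheta, theta3_eq, theta2_eq]

lemma rhombTheta_strictMono_of_two_le {α : ℝ} (hα : 2 ≤ α) :
    StrictMonoOn (rhombTheta α) (Set.Ici √3) := by
  have hα0 : 0 < α := by linarith
  have hpos : ∀ y : ℝ, √3 ≤ y → 0 < y := fun y hy => by linarith [(sqrt_three_le hy).1]
  rw [funext (rhombTheta_eq α)]
  have hd := fun (y : ℝ) (hy : √3 ≤ y) =>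
    (hasDerivAt_pair 0 hα0 (hpos y hy)).add (hasDerivAt_pair (1 / 2) hα0 (hpos y hy))
  refine strictMonoOn_of_deriv_pos (convex_Ici _)
    (fun y hy => (hd y hy).continuousAt.continuousWithinAt) fun y hy => ?_
  rw [interior_Ici] at hy
  have hy' : √3 < y := hy
  have hy0 := hpos y hy'.le
  have h := (hd y hy'.le).deriv
  have h1 := variation_strictMono hα (Set.mem_Ici.2 le_rfl) (Set.mem_Ici.2 hy'.le) hy'
  simp only [variation_hex hα0] at h1
  refine lt_of_lt_of_eq ?_ h.symm
  rw [← add_div]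
  positivity

lemma rhombTheta_strictMono {α : ℝ} (hα : 0 < α) :
    StrictMonoOn (rhombTheta α) (Set.Ici √3) := by
  rcases le_total 2 α with h | h
  · exact rhombTheta_strictMono_of_two_le h
  · intro a ha b hb hab
    have h4 : 2 ≤ 4 / α := by rw [le_div_iff₀ hα]; linarith
    have := rhombTheta_strictMono_of_two_le h4 ha hb hab
    have ha0 : 0 < a := by linarith [(sqrt_three_le ha).1]
    rw [rhombTheta_inv hα ha0, rhombTheta_inv hα (ha0.trans hab)] at this
    exact lt_of_mul_lt_mul_left this (by positivity)

lemma rectTheta_mono_of_one_le {α : ℝ} (hα : 1 ≤ α) :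
    MonotoneOn (rectTheta α) (Set.Ici √3) := by
  have hα0 : 0 < α := by linarith
  have hpos : ∀ y : ℝ, √3 ≤ y → 0 < y := fun y hy => by linarith [(sqrt_three_le hy).1]
  have e : rectTheta α = fun y => thetaM 0 0 (y * α) * thetaM 0 0 (α / y) := by
    funext y; simp only [rectTheta, theta3_eq]
  rw [e]
  have hd := fun (y : ℝ) (hy : √3 ≤ y) => hasDerivAt_pair 0 hα0 (hpos y hy)
  refine monotoneOn_of_deriv_nonneg (convex_Ici _)
    (fun y hy => (hd y hy).continuousAt.continuousWithinAt)
    (fun y hy => (hd y (interior_subset hy)).differentiableAt.differentiableWithinAt) fun y hy => ?_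
  have hy : √3 ≤ y := interior_subset hy
  have hy0 := hpos y hy
  rw [(hd y hy).deriv]
  refine div_nonneg ?_ (by positivity)
  have b := mul_le_mul_of_nonneg_left (rect_variation_bound hα hy) hy0.le
  have e2 : y * (α / y * (thetaM 0 0 (y * α) * thetaM 0 1 (α / y))) =
      α * (thetaM 0 0 (y * α) * thetaM 0 1 (α / y)) := by field_simp
  rw [e2] at b
  unfold variation
  linarith

lemma rectTheta_mono {α : ℝ} (hα : 0 < α) : MonotoneOn (rectTheta α) (Set.Ici √3) := by
  rcases le_total 1 α with h | h
  · exact rectTheta_mono_of_one_le h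
  · intro a ha b hb hab
    have h4 : 1 ≤ 1 / α := by rw [le_div_iff₀ hα]; linarith
    have := rectTheta_mono_of_one_le h4 ha hb hab
    have ha0 : 0 < a := by linarith [(sqrt_three_le ha).1]
    rw [rectTheta_inv hα ha0, rectTheta_inv hα (ha0.trans_le hab)] at this
    exact le_of_mul_le_mul_left this hα

/-- for all `t, α > 0`, `y ↦ E_t(y;α)` is strictly increasing on `[√3,∞)`;
consequently any minimizer over `[1,∞)` lies in `[1,√3]`. -/
theorem Et_strictMono_and_minimizer_location (t α : ℝ) (ht : 0 < t) (hα : 0 < α) :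
    StrictMonoOn (fun y : ℝ => Et t α y) (Set.Ici (Real.sqrt 3)) ∧
    ∀ y₀ ∈ Set.Ici (1 : ℝ), (∀ y ∈ Set.Ici (1 : ℝ), Et t α y₀ ≤ Et t α y) →
      y₀ ∈ Set.Icc (1 : ℝ) (Real.sqrt 3) := by
  have hmono : StrictMonoOn (fun y : ℝ => Et t α y) (Set.Ici (Real.sqrt 3)) := by
    have hx : 0 < t ^ 2 * α := by positivity
    have hE : ∀ y, Et t α y = theta2 (t ^ 2 * α) * rhombTheta α y
        + (theta3 (t ^ 2 * α) - theta2 (t ^ 2 * α)) * rectTheta α y := fun y => by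
      unfold Et rhombTheta rectTheta; ring
    intro a ha b hb hab
    simp only [hE]
    have h1 := mul_lt_mul_of_pos_left (rhombTheta_strictMono hα ha hb hab) (theta2_pos hx)
    have h2 := mul_le_mul_of_nonneg_left (rectTheta_mono hα ha hb hab.le)
      (sub_nonneg.2 (theta2_le_theta3 hx))
    linarith
  refine ⟨hmono, fun y₀ hy₀ hmin => ⟨hy₀, ?_⟩⟩
  by_contra! hlt
  have h1 : (1 : ℝ) ≤ √3 := by linarith [(sqrt_three_le le_rfl).1]
  have := hmono (Set.mem_Ici.2 le_rfl) (Set.mem_Ici.2 hlt.le) hlt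
  exact absurd (hmin √3 h1) (not_le.2 this)
end
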